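/- Consider the set of ordinals less than or equal to ω^ω, equipped with the subspace topology inherited from the order topology on the ordinals. The derived set of this space (the set of its accumulation points, with the subspace topology) is homeomorphic to the space itself. -/

import Mathlib

open Ordinal

universe u v

theorem aux_compact (c : Ordinal.{u}) : CompactSpace {o : Ordinal.{u} // o ≤ c} := by
  have h : IsCompact (Set.Icc (0 : Ordinal.{u}) c) := isCompact_Icc
  have e : Set.Icc (0 : Ordinal.{u}) c = {o | o ≤ c} := by ext; simp
  rw [e] at h
  exact isCompact_iff_compactSpace.1 h

theorem aux_pow (n : ℕ) : Ordinal.lift.{v} (omega0.{u} ^ (n : Ordinal.{u})) =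
    omega0.{max u v} ^ (n : Ordinal.{max u v}) := by
  rw [opow_natCast, opow_natCast]
  induction n with
  | zero => simp
  | succ k ih => rw [pow_succ, pow_succ, lift_mul, ih, lift_omega0]

theorem aux_opow : Ordinal.lift.{v} (omega0.{u} ^ omega0.{u}) =
    omega0.{max u v} ^ omega0.{max u v} := by
  have h1 : Order.IsNormal (fun a : Ordinal.{u} => Ordinal.lift.{v} (omega0.{u} ^ a)) :=
    (liftInitialSeg.{v, u}.isNormal).comp (isNormal_opow one_lt_omega0)
  have h2 : Order.IsNormal (fun a : Ordinal.{max u v} => omega0.{max u v} ^ a) :=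
    isNormal_opow one_lt_omega0
  apply le_antisymm
  · refine (h1.le_iff_forall_le isSuccLimit_omega0).2 fun a ha => ?_
    obtain ⟨n, rfl⟩ := lt_omega0.1 ha
    simp only [aux_pow]
    exact h2.strictMono.monotone (natCast_lt_omega0 n).le
  · refine (h2.le_iff_forall_le isSuccLimit_omega0).2 fun a ha => ?_
    obtain ⟨n, rfl⟩ := lt_omega0.1 ha
    exact (aux_pow.{u, v} n).symm.trans_le (h1.strictMono.monotone (natCast_lt_omega0 n).le)

theorem aux_lift : Nonempty ({o : Ordinal.{u} // o ≤ omega0 ^ omega0} ≃ₜ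
    {o : Ordinal.{max u v} // o ≤ omega0 ^ omega0}) := by
  have hc : Ordinal.lift.{v} (omega0.{u} ^ omega0.{u}) = omega0 ^ omega0 := aux_opow.{u, v}
  have hcont : Continuous (Ordinal.lift.{v, u}) :=
    (liftInitialSeg.{v, u}.isNormal).continuous
  have := aux_compact.{u} (omega0 ^ omega0)
  let f : {o : Ordinal.{u} // o ≤ omega0 ^ omega0} →
    {o : Ordinal.{max u v} // o ≤ omega0 ^ omega0} :=
    fun o => ⟨Ordinal.lift.{v} o.1, by rw [← hc]; exact Ordinal.lift_le.2 o.2⟩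
  have hf : Continuous f := (hcont.comp continuous_subtype_val).subtype_mk _
  have hb : Function.Bijective f := by
    constructor
    · intro a b h
      have := congrArg Subtype.val h
      exact Subtype.ext (Ordinal.lift_inj.1 this)
    · rintro ⟨b, hb⟩
      rw [← hc] at hb
      obtain ⟨a, rfl⟩ := Ordinal.mem_range_lift_of_le hb
      exact ⟨⟨a, Ordinal.lift_le.1 hb⟩, rfl⟩
  exact ⟨Continuous.homeoOfEquivCompactToT2 (f := Equiv.ofBijective f hb) hf⟩

theorem aux_mem (c : Ordinal.{u}) (x : {o : Ordinal.{u} // o ≤ c}) :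
    x ∈ derivedSet (Set.univ : Set {o : Ordinal.{u} // o ≤ c}) ↔ x.1 ≠ 0 ∧ omega0 ∣ x.1 := by
  have ho : IsOpen {o : Ordinal.{u} | o ≤ c} := by
    have : {o : Ordinal.{u} | o ≤ c} = Set.Iio (Order.succ c) := by ext; simp
    rw [this]; exact isOpen_Iio
  have h1 : AccPt x (Filter.principal Set.univ) ↔ AccPt x.1 (Filter.principal Set.univ) := by
    rw [← (ho.isOpenEmbedding_subtypeVal).accPt_comap_iff]; simp
  rw [mem_derivedSet, h1, ← isSuccPrelimit_iff_omega0_dvd]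
  constructor
  · intro h
    have := h.isSuccLimit
    exact ⟨this.ne_bot, this.isSuccPrelimit⟩
  · rintro ⟨h0, h⟩
    rw [SuccOrder.accPt_principal]
    refine ⟨by simpa using h0, fun b hb => ⟨Order.succ b, trivial, Order.lt_succ b, ?_⟩⟩
    exact h.succ_lt hb

theorem aux_main : Nonempty ({o : Ordinal.{u} // o ≤ omega0 ^ omega0} ≃ₜ
    (derivedSet (Set.univ : Set {o : Ordinal.{u} // o ≤ omega0 ^ omega0}))) := by
  have := aux_compact.{u} (omega0 ^ omega0)
  have hN : Order.IsNormal (fun a : Ordinal.{u} => omega0 * (1 + a)) :=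
    (isNormal_mul_right omega0_pos).comp (isNormal_add_right 1)
  have hc : omega0.{u} * (1 + omega0 ^ omega0) = omega0 ^ omega0 := by
    rw [one_add_of_omega0_le (right_le_opow _ one_lt_omega0)]
    nth_rw 1 [← opow_one omega0]
    rw [← opow_add, one_add_omega0]
  let f : {o : Ordinal.{u} // o ≤ omega0 ^ omega0} →
    (derivedSet (Set.univ : Set {o : Ordinal.{u} // o ≤ omega0 ^ omega0})) :=
    fun o => ⟨⟨omega0 * (1 + o.1), (hN.strictMono.monotone o.2).trans_eq hc⟩,
      (aux_mem _ _).2 ⟨by simp [omega0_ne_zero], dvd_mul_right _ _⟩⟩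
  have hf : Continuous f :=
    ((hN.continuous.comp continuous_subtype_val).subtype_mk _).subtype_mk _
  have hb : Function.Bijective f := by
    constructor
    · intro a b h
      have := congrArg (fun z => z.1.1) h
      exact Subtype.ext (hN.strictMono.injective this)
    · rintro ⟨⟨b, hb⟩, hm⟩
      obtain ⟨h0, d, hd⟩ := (aux_mem _ _).1 hm
      simp only at h0 hd
      have hd1 : 1 ≤ d := by
        rw [Order.one_le_iff_pos, pos_iff_ne_zero]
        rintro rfl
        simp at hd; exact h0 hd
      have hd2 : 1 + (d - 1) = d := Ordinal.add_sub_cancel_of_le hd1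
      refine ⟨⟨d - 1, ?_⟩, ?_⟩
      · rw [← hN.strictMono.le_iff_le]
        simp only [hc, hd2]
        exact hd ▸ hb
      · apply Subtype.ext; apply Subtype.ext
        simp only [f, hd2, hd]
  exact ⟨Continuous.homeoOfEquivCompactToT2 (f := Equiv.ofBijective f hb) hf⟩

theorem aux_final :
    Nonempty ((derivedSet (Set.univ : Set {o : Ordinal.{u} // o ≤ omega0 ^ omega0})) ≃ₜ
      {o : Ordinal.{v} // o ≤ omega0 ^ omega0}) := by
  obtain ⟨e⟩ := aux_main.{u}
  obtain ⟨l1⟩ := aux_lift.{u, v}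
  obtain ⟨l2⟩ := aux_lift.{v, u}
  exact ⟨(e.symm.trans l1).trans l2.symm⟩

/-- The derived set (set of accumulation points) of the space of ordinals `≤ ω^ω`
(with the subspace topology from the order topology on the ordinals) is homeomorphic
to the space itself. -/
theorem stmt_4 :
    Nonempty ((derivedSet (Set.univ : Set {o : Ordinal // o ≤ omega0 ^ omega0})) ≃ₜ
      {o : Ordinal // o ≤ omega0 ^ omega0}) := by
  exact aux_final
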